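/- arXiv:1609.00966 — 3 statements merged into one kernel-verified Lean document; each statement's English description precedes it below -/
import Mathlib

section
/- Let N ⊆ H and N₊ ⊆ H₊ be subsets, let φ_{*bg}, φ_bg : H × H → H₋ be maps, and let ψ_{*cr}, ψ_cr : H₊ × H₊ → H be maps taking values in N such that for all (θ*, θ) ∈ N₊ × N₊: (b·Q*Q + 𝔔) ψ_{*cr}(θ*, θ) = b·Q*θ* + 𝔔 Q₋ φ_{*bg}(ψ_{*cr}(θ*, θ), ψ_cr(θ*, θ)) and (b·Q*Q + 𝔔) ψ_cr(θ*, θ) = b·Q*θ + 𝔔 Q₋ φ_bg(ψ_{*cr}(θ*, θ), ψ_cr(θ*, θ)). Define φ̌_{*cp}(θ*, θ) = φ_{*bg}(ψ_{*cr}(θ*, θ), ψ_cr(θ*, θ)) and φ̌_cp(θ*, θ) = φ_bg(ψ_{*cr}(θ*, θ), ψ_cr(θ*, θ)). Then for all (θ*, θ) ∈ N₊ × N₊: 𝒜_eff(θ*, θ; ψ_{*cr}(θ*, θ), ψ_cr(θ*, θ); φ̌_{*cp}(θ*, θ), φ̌_cp(θ*, θ)) = Ǎ(θ*, θ; φ̌_{*cp}(θ*,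 θ), φ̌_cp(θ*, θ)). -/
open RealInnerProductSpace

/-!
The critical equation for `ψ` is a balance of forces: `𝔔 (ψ - Q₋ φ) = Q* r`, where
`r = b (θ - Q ψ)`. Solving it for `ψ - Q₋ φ` and applying `Q` gives
`((1/b) + Q 𝔔⁻¹ Q*) r = θ - Q Q₋ φ`, so `r = 𝔔̌ (θ - Q̌₋ φ)`. Both quadratic terms of the effective
action are thus pairings with `r`, against `θ* - Q ψ*` and `Q (ψ* - Q₋ φ*)`, and their sum is the
pairing of `θ* - Q̌₋ φ*` with `r`.
-/

theorem ringInverse_apply_eq_iff {R M : Type*} [Semiring R] [AddCommMonoid M] [Module R M]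
    {f : Module.End R M} (hf : IsUnit f) {x y : M} :
    Ring.inverse f y = x ↔ y = f x := by
  obtain ⟨u, rfl⟩ := hf
  rw [Ring.inverse_unit]
  exact inv_smul_eq_iff (g := u)

theorem apply_sub_eq_of_critical {R M N : Type*} [CommRing R] [AddCommGroup M] [Module R M]
    [AddCommGroup N] [Module R N] {b : R} {𝔔 : Module.End R M} {Q : M →ₗ[R] N}
    {Qadj : N →ₗ[R] M} {θ : N} {ψ v : M}
    (hψ : (b • (Qadj ∘ₗ Q) + 𝔔) ψ = b • Qadj θ + 𝔔 v) :
    𝔔 (ψ - v) = Qadj (b • (θ - Q ψ)) := by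
  simp only [LinearMap.add_apply, LinearMap.smul_apply, LinearMap.comp_apply] at hψ
  simp only [map_sub, map_smul, smul_sub]
  rw [sub_eq_sub_iff_add_eq_add, add_comm, hψ]

section EffectiveAction

variable {K H Hp : Type*} [Field K] [AddCommGroup H] [Module K H] [AddCommGroup Hp] [Module K Hp]

/-- The operator `1/b + Q 𝔔⁻¹ Q*` on the block-spin space, whose inverse is the paper's `𝔔̌`.
The argument `Qadj` plays the role of `Q*`; the inverse of `𝔔` is `Ring.inverse`, which is `0` when
`𝔔` is not invertible. -/
noncomputable def blockCovariance (b : K) (𝔔 : Module.End K H) (Q : H →ₗ[K] Hp)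
    (Qadj : Hp →ₗ[K] H) : Module.End K Hp :=
  b⁻¹ • 1 + Q ∘ₗ Ring.inverse 𝔔 ∘ₗ Qadj

theorem blockCovariance_apply (b : K) (𝔔 : Module.End K H) (Q : H →ₗ[K] Hp) (Qadj : Hp →ₗ[K] H)
    (x : Hp) :
    blockCovariance b 𝔔 Q Qadj x = b⁻¹ • x + Q (Ring.inverse 𝔔 (Qadj x)) :=
  rfl

variable {b : K} {𝔔 : Module.End K H} {Q : H →ₗ[K] Hp} {Qadj : Hp →ₗ[K] H}

theorem blockCovariance_apply_of_critical (hb : b ≠ 0) (h𝔔 : IsUnit 𝔔) {θ : Hp} {ψ v : H}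
    (hψ : (b • (Qadj ∘ₗ Q) + 𝔔) ψ = b • Qadj θ + 𝔔 v) :
    blockCovariance b 𝔔 Q Qadj (b • (θ - Q ψ)) = θ - Q v := by
  have hsolve : Ring.inverse 𝔔 (Qadj (b • (θ - Q ψ))) = ψ - v :=
    (ringInverse_apply_eq_iff h𝔔).2 (apply_sub_eq_of_critical hψ).symm
  rw [blockCovariance_apply, hsolve, inv_smul_smul₀ hb, map_sub, sub_add_sub_cancel]

theorem stmt_8_general {Hm : Type*} {I : K →+* K} {B : H →ₛₗ[I] H →ₗ[K] K}
    {Bp : Hp →ₛₗ[I] Hp →ₗ[K] K} (hadj : ∀ x y, Bp (Q x) y = B x (Qadj y)) (hb : b ≠ 0)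
    (h𝔔 : IsUnit 𝔔) (hC : IsUnit (blockCovariance b 𝔔 Q Qadj)) (Qm : Hm → H)
    (𝔄 : Hm → Hm → K) (θs : Hp) (ψs : H) (φs : Hm) {θ : Hp} {ψ : H} {φ : Hm}
    (hψ : (b • (Qadj ∘ₗ Q) + 𝔔) ψ = b • Qadj θ + 𝔔 (Qm φ)) :
    b * Bp (θs - Q ψs) (θ - Q ψ) + (B (ψs - Qm φs) (𝔔 (ψ - Qm φ)) + 𝔄 φs φ)
      = Bp (θs - Q (Qm φs)) (Ring.inverse (blockCovariance b 𝔔 Q Qadj) (θ - Q (Qm φ)))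
          + 𝔄 φs φ := by
  set r := b • (θ - Q ψ)
  have hforce : Ring.inverse (blockCovariance b 𝔔 Q Qadj) (θ - Q (Qm φ)) = r :=
    (ringInverse_apply_eq_iff hC).2 (blockCovariance_apply_of_critical hb h𝔔 hψ).symm
  rw [← add_assoc, hforce]
  congr 1
  calc
    b * Bp (θs - Q ψs) (θ - Q ψ) + B (ψs - Qm φs) (𝔔 (ψ - Qm φ))
        = Bp (θs - Q ψs) r + Bp (Q (ψs - Qm φs)) r := by
      rw [apply_sub_eq_of_critical hψ, ← hadj, ← smul_eq_mul, ← map_smul]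
    _ = Bp (θs - Q (Qm φs)) r := by
      rw [← LinearMap.map_add₂, map_sub Q, sub_add_sub_cancel]

end EffectiveAction

section Positivity

variable {𝕜 E F : Type*} [RCLike 𝕜] [NormedAddCommGroup E] [InnerProductSpace 𝕜 E]
  [NormedAddCommGroup F] [InnerProductSpace 𝕜 F]

theorem isUnit_of_forall_inner_apply_self_ne_zero [FiniteDimensional 𝕜 E] {f : Module.End 𝕜 E}
    (hf : ∀ x, x ≠ 0 → inner 𝕜 (f x) x ≠ 0) : IsUnit f := by
  rw [LinearMap.isUnit_iff_ker_eq_bot, LinearMap.ker_eq_bot']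
  intro x hx
  by_contra hne
  exact hf x hne (by rw [hx, inner_zero_left])

theorem re_inner_ringInverse_apply_self_nonneg {f : Module.End 𝕜 E} (hf : IsUnit f)
    (hpos : ∀ x, 0 ≤ RCLike.re (inner 𝕜 (f x) x)) (y : E) :
    0 ≤ RCLike.re (inner 𝕜 (Ring.inverse f y) y) := by
  have hy : f (Ring.inverse f y) = y := ((ringInverse_apply_eq_iff hf).1 rfl).symm
  simpa only [hy, inner_re_symm] using hpos (Ring.inverse f y)

variable [FiniteDimensional 𝕜 E] [FiniteDimensional 𝕜 F]

theorem re_inner_blockCovariance_apply_self_pos {b : 𝕜} (hb : 0 < RCLike.re b)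
    {𝔔 : Module.End 𝕜 E} (h𝔔 : IsUnit 𝔔) (hpos : ∀ x, 0 ≤ RCLike.re (inner 𝕜 (𝔔 x) x))
    (Q : E →ₗ[𝕜] F) {x : F} (hx : x ≠ 0) :
    0 < RCLike.re (inner 𝕜 (blockCovariance b 𝔔 Q (LinearMap.adjoint Q) x) x) := by
  have hb_inv : 0 < RCLike.re b⁻¹ := by
    have hb_ne : b ≠ 0 := by rintro rfl; simp at hb
    rw [RCLike.inv_re]
    exact div_pos hb (RCLike.normSq_pos.2 hb_ne)
  have hscalar : 0 < RCLike.re (inner 𝕜 (b⁻¹ • x) x) := by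
    rw [inner_smul_left, inner_self_eq_norm_sq_to_K, ← RCLike.ofReal_pow, RCLike.re_mul_ofReal,
      RCLike.conj_re]
    positivity
  rw [blockCovariance_apply, inner_add_left, map_add, ← LinearMap.adjoint_inner_right]
  exact add_pos_of_pos_of_nonneg hscalar (re_inner_ringInverse_apply_self_nonneg h𝔔 hpos _)

theorem isUnit_blockCovariance_adjoint {b : 𝕜} (hb : 0 < RCLike.re b) {𝔔 : Module.End 𝕜 E}
    (h𝔔 : IsUnit 𝔔) (hpos : ∀ x, 0 ≤ RCLike.re (inner 𝕜 (𝔔 x) x)) (Q : E →ₗ[𝕜] F) :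
    IsUnit (blockCovariance b 𝔔 Q (LinearMap.adjoint Q)) := by
  refine isUnit_of_forall_inner_apply_self_ne_zero fun x hx hzero ↦ ?_
  simpa only [hzero, map_zero, lt_irrefl] using
    re_inner_blockCovariance_apply_self_pos hb h𝔔 hpos Q hx

end Positivity

/-- Proposition (concatenation of background fields), part (b):
`𝒜_eff(θ*,θ; ψ*cr, ψcr; φ̌*cp, φ̌cp) = Ǎ(θ*,θ; φ̌*cp, φ̌cp)`. -/
theorem stmt_8
    {Hm H Hp : Type*}
    [NormedAddCommGroup Hm] [InnerProductSpace ℝ Hm] [FiniteDimensional ℝ Hm]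
    [NormedAddCommGroup H] [InnerProductSpace ℝ H] [FiniteDimensional ℝ H]
    [NormedAddCommGroup Hp] [InnerProductSpace ℝ Hp] [FiniteDimensional ℝ Hp]
    (Qm : Hm →ₗ[ℝ] H) (Q : H →ₗ[ℝ] Hp)
    (b : ℝ) (hb : 0 < b)
    (Qf : Module.End ℝ H) (hQfsym : Qf.IsSymmetric)
    (hQfpos : ∀ x : H, x ≠ 0 → 0 < ⟪Qf x, x⟫)
    (Qfc : Module.End ℝ Hp)
    (hQfc : Qfc = Ring.inverse
      (b⁻¹ • (1 : Module.End ℝ Hp)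
        + Q ∘ₗ Ring.inverse Qf ∘ₗ LinearMap.adjoint Q))
    (𝔄 : Hm → Hm → ℝ)
    (N : Set H) (Np : Set Hp)
    (φsbg φbg : H → H → Hm)
    (ψscr ψcr : Hp → Hp → H)
    (hrange : ∀ θs θ : Hp, ψscr θs θ ∈ N ∧ ψcr θs θ ∈ N)
    (hψscr : ∀ θs ∈ Np, ∀ θ ∈ Np,
      (b • (LinearMap.adjoint Q ∘ₗ Q) + Qf) (ψscr θs θ)
        = b • LinearMap.adjoint Q θs
          + Qf (Qm (φsbg (ψscr θs θ) (ψcr θs θ))))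
    (hψcr : ∀ θs ∈ Np, ∀ θ ∈ Np,
      (b • (LinearMap.adjoint Q ∘ₗ Q) + Qf) (ψcr θs θ)
        = b • LinearMap.adjoint Q θ
          + Qf (Qm (φbg (ψscr θs θ) (ψcr θs θ))))
    (φscp φcp : Hp → Hp → Hm)
    (hφscp : ∀ θs θ : Hp, φscp θs θ = φsbg (ψscr θs θ) (ψcr θs θ))
    (hφcp : ∀ θs θ : Hp, φcp θs θ = φbg (ψscr θs θ) (ψcr θs θ)) :
    ∀ θs ∈ Np, ∀ θ ∈ Np,
      b * ⟪θs - Q (ψscr θs θ), θ - Q (ψcr θs θ)⟫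
        + (⟪ψscr θs θ - Qm (φscp θs θ), Qf (ψcr θs θ - Qm (φcp θs θ))⟫
            + 𝔄 (φscp θs θ) (φcp θs θ))
      = ⟪θs - (Q ∘ₗ Qm) (φscp θs θ), Qfc (θ - (Q ∘ₗ Qm) (φcp θs θ))⟫
          + 𝔄 (φscp θs θ) (φcp θs θ) := by
  intro θs hθs θ hθ
  have h𝔔 : IsUnit Qf := isUnit_of_forall_inner_apply_self_ne_zero fun x hx ↦ (hQfpos x hx).ne'
  have hnonneg (x : H) : 0 ≤ ⟪Qf x, x⟫ := by
    obtain rfl | hx := eq_or_ne x 0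
    · rw [inner_zero_right]
    · exact (hQfpos x hx).le
  rw [hQfc]
  exact stmt_8_general (B := innerₗ H) (Bp := innerₗ Hp)
    (fun x y ↦ (Q.adjoint_inner_right x y).symm) hb.ne' h𝔔
    (isUnit_blockCovariance_adjoint hb h𝔔 hnonneg Q) Qm 𝔄 θs (ψscr θs θ) (φscp θs θ)
    (by simpa only [hφcp] using hψcr θs hθs θ hθ)
end

section
/- Assume 𝔄 : H₋ × H₋ → ℝ is differentiable, and write ∇₁𝔄 and ∇₂𝔄 for its gradients with respect to the first and second H₋-variables. Let N ⊆ H and N₊ ⊆ H₊ be subsets, let φ_{*bg}, φ_bg : H × H → H₋ satisfy, for all (ψ*, ψ) ∈ N × N: Q₋*𝔔Q₋ φ_{*bg}(ψ*, ψ) + ∇₂𝔄(φ_{*bg}(ψ*, ψ), φ_bg(ψ*, ψ)) = Q₋*𝔔ψ* and Q₋*𝔔Q₋ φ_bg(ψ*, ψ) + ∇₁𝔄(φ_{*bg}(ψ*, ψ), φ_bg(ψ*, ψ)) = Q₋*𝔔ψ, and let ψ_{*cr}, ψ_cr : H₊ × H₊ → H take values in N and satisfy, for all (θ*, θ) ∈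 N₊ × N₊: (b·Q*Q + 𝔔) ψ_{*cr}(θ*, θ) = b·Q*θ* + 𝔔 Q₋ φ_{*bg}(ψ_{*cr}(θ*, θ), ψ_cr(θ*, θ)) and (b·Q*Q + 𝔔) ψ_cr(θ*, θ) = b·Q*θ + 𝔔 Q₋ φ_bg(ψ_{*cr}(θ*, θ), ψ_cr(θ*, θ)). Define φ̌_{*cp}(θ*, θ) = φ_{*bg}(ψ_{*cr}(θ*, θ), ψ_cr(θ*, θ)) and φ̌_cp(θ*, θ) = φ_bg(ψ_{*cr}(θ*, θ), ψ_cr(θ*, θ)). Then for all (θ*, θ) ∈ N₊ × N₊: Q̌₋*𝔔̌Q̌₋ φ̌_{*cp}(θ*, θ) + ∇₂𝔄(φ̌_{*cp}(θ*, θ), φ̌_cp(θ*, θ)) = Q̌₋*𝔔̌θ* and Q̌₋*𝔔̌Q̌₋ φ̌_cp(θ*, θ) + ∇₁𝔄(φ̌_{*cp}(θ*, θ), φ̌_cp(θ*, θ)) = Q̌₋*𝔔̌θ. -/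
open RealInnerProductSpace

/-!
Write `v = Q₋φ`. The critical field equation says `𝔔(ψ - v) = Q* b(θ - Qψ)`. Applying `Q𝔔⁻¹` to it
shows that `1/b + Q𝔔⁻¹Q*` sends `b(θ - Qψ)` to `θ - Qv`, i.e. `b(θ - Qψ) = 𝔔̌(θ - Qv)`, hence
`𝔔(ψ - v) = Q*𝔔̌(θ - Qv)`. The background field equations see `𝔔` only through `Q₋*𝔔(ψ - v)`, so
this substitution turns them into the equations at the next scale.
-/

section InnerProduct

variable {𝕜 E F : Type*} [RCLike 𝕜]
  [NormedAddCommGroup E] [InnerProductSpace 𝕜 E] [NormedAddCommGroup F] [InnerProductSpace 𝕜 F]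

lemma isUnit_of_inner_map_self_ne_zero [FiniteDimensional 𝕜 E] {T : Module.End 𝕜 E}
    (hT : ∀ x, x ≠ 0 → inner 𝕜 (T x) x ≠ 0) : IsUnit T := by
  rw [LinearMap.isUnit_iff_ker_eq_bot, LinearMap.ker_eq_bot']
  intro x hx
  by_contra hne
  exact hT x hne (by rw [hx, inner_zero_left])

lemma isUnit_smul_one_add_of_re_inner_nonneg [FiniteDimensional 𝕜 E] {c : 𝕜}
    (hc : 0 < RCLike.re c) {T : Module.End 𝕜 E} (hT : ∀ x, 0 ≤ RCLike.re (inner 𝕜 (T x) x)) :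
    IsUnit (c • 1 + T) := by
  refine isUnit_of_inner_map_self_ne_zero fun x hx h ↦ ?_
  have hcx : 0 < RCLike.re (inner 𝕜 (c • x) x) := by
    rw [inner_smul_left, inner_self_eq_norm_sq_to_K, ← RCLike.ofReal_pow, RCLike.re_mul_ofReal,
      RCLike.conj_re]
    have := norm_pos_iff.mpr hx
    positivity
  have hre : 0 < RCLike.re (inner 𝕜 ((c • 1 + T) x) x) := by
    rw [LinearMap.add_apply, LinearMap.smul_apply, Module.End.one_apply, inner_add_left, map_add]
    exact add_pos_of_pos_of_nonneg hcx (hT x)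
  rw [h, map_zero] at hre
  exact hre.false

lemma re_inner_inverse_nonneg {T : Module.End 𝕜 E} (hT : IsUnit T)
    (hT_nonneg : ∀ x, 0 ≤ RCLike.re (inner 𝕜 (T x) x)) (x : E) :
    0 ≤ RCLike.re (inner 𝕜 (Ring.inverse T x) x) := by
  have hx : T (Ring.inverse T x) = x := LinearMap.congr_fun (Ring.mul_inverse_cancel T hT) x
  have h := hT_nonneg (Ring.inverse T x)
  rwa [hx, inner_re_symm] at h

lemma isUnit_smul_one_add_comp_inverse_comp_adjoint
    [FiniteDimensional 𝕜 E] [FiniteDimensional 𝕜 F] {c : 𝕜} (hc : 0 < RCLike.re c)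
    {T : Module.End 𝕜 E} (hT : IsUnit T) (hT_nonneg : ∀ x, 0 ≤ RCLike.re (inner 𝕜 (T x) x))
    (A : E →ₗ[𝕜] F) :
    IsUnit (c • (1 : Module.End 𝕜 F) + A ∘ₗ Ring.inverse T ∘ₗ LinearMap.adjoint A) := by
  refine isUnit_smul_one_add_of_re_inner_nonneg hc fun x ↦ ?_
  rw [LinearMap.comp_apply, ← LinearMap.adjoint_inner_right]
  exact re_inner_inverse_nonneg hT hT_nonneg _

end InnerProduct

section Algebra

-- In this section `P`, `Pm`, `T`, `S`, `Tc` play the roles of `Q*`, `Q₋*`, `𝔔`, `𝔔⁻¹`, `𝔔̌`, and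
-- `g`, `G₁`, `G₂` those of the partial gradients of `𝔄`.

variable {R Hm H Hp : Type*} [CommRing R] [AddCommGroup Hm] [Module R Hm]
  [AddCommGroup H] [Module R H] [AddCommGroup Hp] [Module R Hp]

lemma map_sub_eq_of_critical_eq {Q : H →ₗ[R] Hp} {P : Hp →ₗ[R] H} {b : R} {T : Module.End R H}
    {v ψ : H} {θ : Hp} (hψ : (b • (P ∘ₗ Q) + T) ψ = b • P θ + T v) :
    T (ψ - v) = P (b • (θ - Q ψ)) := by
  simp only [LinearMap.add_apply, LinearMap.smul_apply, LinearMap.comp_apply] at hψ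
  simp only [map_sub, map_smul, smul_sub]
  rw [sub_eq_sub_iff_add_eq_add, add_comm, hψ]

lemma smul_sub_eq_of_critical_eq {Q : H →ₗ[R] Hp} {P : Hp →ₗ[R] H} {b : Rˣ}
    {T S : Module.End R H} (hST : S * T = 1) {Tc : Module.End R Hp}
    (hTc : Tc * (b⁻¹ • (1 : Module.End R Hp) + Q ∘ₗ S ∘ₗ P) = 1) {v ψ : H} {θ : Hp}
    (hψ : (b • (P ∘ₗ Q) + T) ψ = b • P θ + T v) :
    b • (θ - Q ψ) = Tc (θ - Q v) := by
  have hS : S (P (b • (θ - Q ψ))) = ψ - v := by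
    rw [Units.smul_def, ← map_sub_eq_of_critical_eq hψ]
    exact LinearMap.congr_fun hST _
  have hM : (b⁻¹ • (1 : Module.End R Hp) + Q ∘ₗ S ∘ₗ P) (b • (θ - Q ψ)) = θ - Q v := by
    rw [LinearMap.add_apply, LinearMap.smul_apply, Module.End.one_apply, inv_smul_smul,
      LinearMap.comp_apply, LinearMap.comp_apply, hS, map_sub, sub_add_sub_cancel]
  rw [← hM]
  exact (LinearMap.congr_fun hTc _).symm

lemma background_eq_comp_of_critical_eq {Qm : Hm →ₗ[R] H} {Pm : H →ₗ[R] Hm} {Q : H →ₗ[R] Hp}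
    {P : Hp →ₗ[R] H} {b : Rˣ} {T S : Module.End R H} (hST : S * T = 1) {Tc : Module.End R Hp}
    (hTc : Tc * (b⁻¹ • (1 : Module.End R Hp) + Q ∘ₗ S ∘ₗ P) = 1)
    {φ g : Hm} {ψ : H} {θ : Hp}
    (hφ : (Pm ∘ₗ T ∘ₗ Qm) φ + g = (Pm ∘ₗ T) ψ)
    (hψ : (b • (P ∘ₗ Q) + T) ψ = b • P θ + T (Qm φ)) :
    ((Pm ∘ₗ P) ∘ₗ Tc ∘ₗ (Q ∘ₗ Qm)) φ + g = ((Pm ∘ₗ P) ∘ₗ Tc) θ := by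
  simp only [LinearMap.comp_apply] at hφ ⊢
  have hg : g = Pm (P (Tc (θ - Q (Qm φ)))) :=
    calc
      g = Pm (T (ψ - Qm φ)) := by rw [map_sub, map_sub, ← hφ, add_sub_cancel_left]
      _ = Pm (P (b • (θ - Q ψ))) := congrArg Pm (map_sub_eq_of_critical_eq hψ)
      _ = Pm (P (Tc (θ - Q (Qm φ)))) := by rw [smul_sub_eq_of_critical_eq hST hTc hψ]
  rw [hg, map_sub, map_sub, map_sub, add_sub_cancel]

theorem stmt_9_general (Qm : Hm →ₗ[R] H) (Pm : H →ₗ[R] Hm) (Q : H →ₗ[R] Hp) (P : Hp →ₗ[R] H)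
    (b : Rˣ) (T S : Module.End R H) (hST : S * T = 1) (Tc : Module.End R Hp)
    (hTc : Tc * (b⁻¹ • (1 : Module.End R Hp) + Q ∘ₗ S ∘ₗ P) = 1)
    (G₁ G₂ : Hm → Hm → Hm) (N : Set H) (Np : Set Hp) (φsbg φbg : H → H → Hm)
    (hbg : ∀ ψs ∈ N, ∀ ψ ∈ N,
      (Pm ∘ₗ T ∘ₗ Qm) (φsbg ψs ψ) + G₂ (φsbg ψs ψ) (φbg ψs ψ) = (Pm ∘ₗ T) ψs ∧
      (Pm ∘ₗ T ∘ₗ Qm) (φbg ψs ψ) + G₁ (φsbg ψs ψ) (φbg ψs ψ) = (Pm ∘ₗ T) ψ)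
    (ψscr ψcr : Hp → Hp → H)
    (hrange : ∀ θs ∈ Np, ∀ θ ∈ Np, ψscr θs θ ∈ N ∧ ψcr θs θ ∈ N)
    (hψscr : ∀ θs ∈ Np, ∀ θ ∈ Np,
      (b • (P ∘ₗ Q) + T) (ψscr θs θ) = b • P θs + T (Qm (φsbg (ψscr θs θ) (ψcr θs θ))))
    (hψcr : ∀ θs ∈ Np, ∀ θ ∈ Np,
      (b • (P ∘ₗ Q) + T) (ψcr θs θ) = b • P θ + T (Qm (φbg (ψscr θs θ) (ψcr θs θ))))
    (φscp φcp : Hp → Hp → Hm)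
    (hφscp : ∀ θs ∈ Np, ∀ θ ∈ Np, φscp θs θ = φsbg (ψscr θs θ) (ψcr θs θ))
    (hφcp : ∀ θs ∈ Np, ∀ θ ∈ Np, φcp θs θ = φbg (ψscr θs θ) (ψcr θs θ)) :
    ∀ θs ∈ Np, ∀ θ ∈ Np,
      ((Pm ∘ₗ P) ∘ₗ Tc ∘ₗ (Q ∘ₗ Qm)) (φscp θs θ) + G₂ (φscp θs θ) (φcp θs θ)
        = ((Pm ∘ₗ P) ∘ₗ Tc) θs ∧
      ((Pm ∘ₗ P) ∘ₗ Tc ∘ₗ (Q ∘ₗ Qm)) (φcp θs θ) + G₁ (φscp θs θ) (φcp θs θ)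
        = ((Pm ∘ₗ P) ∘ₗ Tc) θ := by
  intro θs hθs θ hθ
  obtain ⟨hψs_mem, hψ_mem⟩ := hrange θs hθs θ hθ
  obtain ⟨hφs, hφ⟩ := hbg _ hψs_mem _ hψ_mem
  rw [hφscp θs hθs θ hθ, hφcp θs hθs θ hθ]
  exact ⟨background_eq_comp_of_critical_eq hST hTc hφs (hψscr θs hθs θ hθ),
    background_eq_comp_of_critical_eq hST hTc hφ (hψcr θs hθs θ hθ)⟩

end Algebra

/-- Proposition (concatenation of background fields), part (c):
the compositions `φ̌⁽*⁾cp` satisfy the next scale background field equations. -/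
theorem stmt_9
    {Hm H Hp : Type*}
    [NormedAddCommGroup Hm] [InnerProductSpace ℝ Hm] [FiniteDimensional ℝ Hm]
    [NormedAddCommGroup H] [InnerProductSpace ℝ H] [FiniteDimensional ℝ H]
    [NormedAddCommGroup Hp] [InnerProductSpace ℝ Hp] [FiniteDimensional ℝ Hp]
    (Qm : Hm →ₗ[ℝ] H) (Q : H →ₗ[ℝ] Hp)
    (b : ℝ) (hb : 0 < b)
    (Qf : Module.End ℝ H) (hQfsym : Qf.IsSymmetric)
    (hQfpos : ∀ x : H, x ≠ 0 → 0 < ⟪Qf x, x⟫)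
    (Qfc : Module.End ℝ Hp)
    (hQfc : Qfc = Ring.inverse
      (b⁻¹ • (1 : Module.End ℝ Hp)
        + Q ∘ₗ Ring.inverse Qf ∘ₗ LinearMap.adjoint Q))
    (𝔄 : Hm → Hm → ℝ)
    (h𝔄 : Differentiable ℝ (fun p : Hm × Hm => 𝔄 p.1 p.2))
    (N : Set H) (Np : Set Hp)
    (φsbg φbg : H → H → Hm)
    (hbg : ∀ ψs ∈ N, ∀ ψ ∈ N,
      (LinearMap.adjoint Qm ∘ₗ Qf ∘ₗ Qm) (φsbg ψs ψ)
          + gradient (fun y : Hm => 𝔄 (φsbg ψs ψ) y) (φbg ψs ψ)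
        = (LinearMap.adjoint Qm ∘ₗ Qf) ψs ∧
      (LinearMap.adjoint Qm ∘ₗ Qf ∘ₗ Qm) (φbg ψs ψ)
          + gradient (fun x : Hm => 𝔄 x (φbg ψs ψ)) (φsbg ψs ψ)
        = (LinearMap.adjoint Qm ∘ₗ Qf) ψ)
    (ψscr ψcr : Hp → Hp → H)
    (hrange : ∀ θs θ : Hp, ψscr θs θ ∈ N ∧ ψcr θs θ ∈ N)
    (hψscr : ∀ θs ∈ Np, ∀ θ ∈ Np,
      (b • (LinearMap.adjoint Q ∘ₗ Q) + Qf) (ψscr θs θ)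
        = b • LinearMap.adjoint Q θs
          + Qf (Qm (φsbg (ψscr θs θ) (ψcr θs θ))))
    (hψcr : ∀ θs ∈ Np, ∀ θ ∈ Np,
      (b • (LinearMap.adjoint Q ∘ₗ Q) + Qf) (ψcr θs θ)
        = b • LinearMap.adjoint Q θ
          + Qf (Qm (φbg (ψscr θs θ) (ψcr θs θ))))
    (φscp φcp : Hp → Hp → Hm)
    (hφscp : ∀ θs θ : Hp, φscp θs θ = φsbg (ψscr θs θ) (ψcr θs θ))
    (hφcp : ∀ θs θ : Hp, φcp θs θ = φbg (ψscr θs θ) (ψcr θs θ)) :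
    ∀ θs ∈ Np, ∀ θ ∈ Np,
      (LinearMap.adjoint (Q ∘ₗ Qm) ∘ₗ Qfc ∘ₗ (Q ∘ₗ Qm)) (φscp θs θ)
          + gradient (fun y : Hm => 𝔄 (φscp θs θ) y) (φcp θs θ)
        = (LinearMap.adjoint (Q ∘ₗ Qm) ∘ₗ Qfc) θs ∧
      (LinearMap.adjoint (Q ∘ₗ Qm) ∘ₗ Qfc ∘ₗ (Q ∘ₗ Qm)) (φcp θs θ)
          + gradient (fun x : Hm => 𝔄 x (φcp θs θ)) (φscp θs θ)
        = (LinearMap.adjoint (Q ∘ₗ Qm) ∘ₗ Qfc) θ := by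
  have hQf : IsUnit Qf := isUnit_of_inner_map_self_ne_zero fun x hx ↦ (hQfpos x hx).ne'
  have hQf_nonneg (x : H) : 0 ≤ ⟪Qf x, x⟫ := by
    obtain rfl | hx := eq_or_ne x 0
    · rw [inner_zero_right]
    · exact (hQfpos x hx).le
  have hM := isUnit_smul_one_add_comp_inverse_comp_adjoint (inv_pos.mpr hb) hQf hQf_nonneg Q
  rw [LinearMap.adjoint_comp]
  exact stmt_9_general Qm (LinearMap.adjoint Qm) Q (LinearMap.adjoint Q) (Units.mk0 b hb.ne')
    Qf (Ring.inverse Qf) (Ring.inverse_mul_cancel Qf hQf) Qfc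
    (hQfc ▸ Ring.inverse_mul_cancel _ hM)
    (fun x y ↦ gradient (fun x' ↦ 𝔄 x' y) x) (fun x y ↦ gradient (fun y' ↦ 𝔄 x y') y)
    N Np φsbg φbg hbg ψscr ψcr (fun θs _ θ _ ↦ hrange θs θ) hψscr hψcr φscp φcp
    (fun θs _ θ _ ↦ hφscp θs θ) (fun θs _ θ _ ↦ hφcp θs θ)
end

section
/- Assume in addition that D is invertible and that Δ + b·Q*Q is invertible, where Δ = 𝔔 − 𝔔 Q₋ S Q₋* 𝔔, and set C = (Δ + b·Q*Q)⁻¹. Then C = (b·Q*Q + 𝔔)⁻¹ + (b·Q*Q + 𝔔)⁻¹ 𝔔 Q₋ Š Q₋* 𝔔 (b·Q*Q + 𝔔)⁻¹, where S = (D + Q₋*𝔔Q₋)⁻¹ and Š = (D + Q̌₋*𝔔̌Q̌₋)⁻¹. -/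
open RealInnerProductSpace

/-!
The operator `C` is the inverse of `b Q*Q + 𝔔` perturbed by `-𝔔 Q₋ S Q₋* 𝔔`. By the Woodbury
identity it is the asserted expression with `Š` replaced by the inverse of
`D + Q₋*𝔔Q₋ - Q₋*𝔔 (b Q*Q + 𝔔)⁻¹ 𝔔Q₋`. A second use of Woodbury gives
`Q*𝔔̌Q = 𝔔 - 𝔔 (b Q*Q + 𝔔)⁻¹ 𝔔`, and hence that operator is `D + Q̌₋*𝔔̌Q̌₋`.
-/

open scoped Ring

section Woodbury

variable {R M N : Type*} [Semiring R] [AddCommGroup M] [AddCommGroup N] [Module R M] [Module R N]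
  {A : Module.End R M} {B : Module.End R N} {U : N →ₗ[R] M} {V : M →ₗ[R] N}

theorem apply_ringInverse_apply (hA : IsUnit A) (x : M) : A (A⁻¹ʳ x) = x :=
  LinearMap.congr_fun (Ring.mul_inverse_cancel A hA) x

theorem ringInverse_apply_apply (hA : IsUnit A) (x : M) : A⁻¹ʳ (A x) = x :=
  LinearMap.congr_fun (Ring.inverse_mul_cancel A hA) x

theorem add_comp_ringInverse_comp_comp (hA : IsUnit A) (hB : IsUnit B) :
    (A + U ∘ₗ B⁻¹ʳ ∘ₗ V) ∘ₗ A⁻¹ʳ ∘ₗ U = U ∘ₗ B⁻¹ʳ ∘ₗ (B + V ∘ₗ A⁻¹ʳ ∘ₗ U) := by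
  ext x
  simp [apply_ringInverse_apply hA, ringInverse_apply_apply hB]

theorem comp_ringInverse_comp_add (hA : IsUnit A) (hB : IsUnit B) :
    V ∘ₗ A⁻¹ʳ ∘ₗ (A + U ∘ₗ B⁻¹ʳ ∘ₗ V) = (B + V ∘ₗ A⁻¹ʳ ∘ₗ U) ∘ₗ B⁻¹ʳ ∘ₗ V := by
  ext x
  simp [ringInverse_apply_apply hA, apply_ringInverse_apply hB]

theorem add_comp_ringInverse_comp_mul_eq_one (hA : IsUnit A) (hB : IsUnit B)
    (hK : IsUnit (B + V ∘ₗ A⁻¹ʳ ∘ₗ U)) :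
    (A + U ∘ₗ B⁻¹ʳ ∘ₗ V) *
      (A⁻¹ʳ - A⁻¹ʳ ∘ₗ U ∘ₗ (B + V ∘ₗ A⁻¹ʳ ∘ₗ U)⁻¹ʳ ∘ₗ V ∘ₗ A⁻¹ʳ) = 1 := by
  ext x
  have push := LinearMap.congr_fun (add_comp_ringInverse_comp_comp (U := U) (V := V) hA hB)
    ((B + V ∘ₗ A⁻¹ʳ ∘ₗ U)⁻¹ʳ (V (A⁻¹ʳ x)))
  simp only [LinearMap.comp_apply, apply_ringInverse_apply hK] at push
  simp only [Module.End.mul_apply, LinearMap.sub_apply, LinearMap.comp_apply, map_sub, push]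
  simp [apply_ringInverse_apply hA]

theorem mul_add_comp_ringInverse_comp_eq_one (hA : IsUnit A) (hB : IsUnit B)
    (hK : IsUnit (B + V ∘ₗ A⁻¹ʳ ∘ₗ U)) :
    (A⁻¹ʳ - A⁻¹ʳ ∘ₗ U ∘ₗ (B + V ∘ₗ A⁻¹ʳ ∘ₗ U)⁻¹ʳ ∘ₗ V ∘ₗ A⁻¹ʳ) *
      (A + U ∘ₗ B⁻¹ʳ ∘ₗ V) = 1 := by
  ext x
  have push := LinearMap.congr_fun (comp_ringInverse_comp_add (U := U) (V := V) hA hB) x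
  simp only [LinearMap.comp_apply] at push
  simp only [Module.End.mul_apply, LinearMap.sub_apply, LinearMap.comp_apply, push,
    ringInverse_apply_apply hK]
  simp [ringInverse_apply_apply hA]

theorem isUnit_add_comp_ringInverse_comp (hA : IsUnit A) (hB : IsUnit B)
    (hK : IsUnit (B + V ∘ₗ A⁻¹ʳ ∘ₗ U)) : IsUnit (A + U ∘ₗ B⁻¹ʳ ∘ₗ V) :=
  ⟨⟨_, _, add_comp_ringInverse_comp_mul_eq_one hA hB hK,
    mul_add_comp_ringInverse_comp_eq_one hA hB hK⟩, rfl⟩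

theorem ringInverse_add_comp_ringInverse_comp (hA : IsUnit A) (hB : IsUnit B)
    (hK : IsUnit (B + V ∘ₗ A⁻¹ʳ ∘ₗ U)) :
    (A + U ∘ₗ B⁻¹ʳ ∘ₗ V)⁻¹ʳ =
      A⁻¹ʳ - A⁻¹ʳ ∘ₗ U ∘ₗ (B + V ∘ₗ A⁻¹ʳ ∘ₗ U)⁻¹ʳ ∘ₗ V ∘ₗ A⁻¹ʳ :=
  Ring.inverse_unit ⟨_, _, add_comp_ringInverse_comp_mul_eq_one hA hB hK,
    mul_add_comp_ringInverse_comp_eq_one hA hB hK⟩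

theorem comp_ringInverse_add_comp_ringInverse_comp_comp (hA : IsUnit A) (hB : IsUnit B)
    (hK : IsUnit (B + V ∘ₗ A⁻¹ʳ ∘ₗ U)) :
    V ∘ₗ (A + U ∘ₗ B⁻¹ʳ ∘ₗ V)⁻¹ʳ ∘ₗ U = B - B * (B + V ∘ₗ A⁻¹ʳ ∘ₗ U)⁻¹ʳ * B := by
  set K := B + V ∘ₗ A⁻¹ʳ ∘ₗ U with K_def
  have hX : V ∘ₗ A⁻¹ʳ ∘ₗ U = K - B := eq_sub_of_add_eq' K_def.symm
  calc
    V ∘ₗ (A + U ∘ₗ B⁻¹ʳ ∘ₗ V)⁻¹ʳ ∘ₗ U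
        = V ∘ₗ A⁻¹ʳ ∘ₗ U - (V ∘ₗ A⁻¹ʳ ∘ₗ U) * K⁻¹ʳ * (V ∘ₗ A⁻¹ʳ ∘ₗ U) := by
      rw [ringInverse_add_comp_ringInverse_comp hA hB hK]
      ext x
      simp [K_def]
    _ = (K - B) - (K - B) * K⁻¹ʳ * (K - B) := by rw [hX]
    _ = B - B * K⁻¹ʳ * B := by
      simp only [sub_mul, mul_sub, Ring.mul_inverse_cancel K hK, one_mul,
        Ring.inverse_mul_cancel_right _ _ hK]
      abel

end Woodbury

section Positive

variable {𝕜 E : Type*} [RCLike 𝕜] [NormedAddCommGroup E] [InnerProductSpace 𝕜 E]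
  [FiniteDimensional 𝕜 E]

theorem isUnit_of_forall_inner_ne_zero {T : Module.End 𝕜 E}
    (hT : ∀ x, x ≠ 0 → inner 𝕜 (T x) x ≠ 0) : IsUnit T := by
  rw [LinearMap.isUnit_iff_ker_eq_bot, LinearMap.ker_eq_bot']
  intro x hx
  by_contra hx0
  exact hT x hx0 (by rw [hx, inner_zero_left])

theorem isUnit_add_of_isPositive {S T : Module.End 𝕜 E} (hS : S.IsPositive)
    (hT : ∀ x, x ≠ 0 → 0 < RCLike.re (inner 𝕜 (T x) x)) : IsUnit (S + T) := by
  refine isUnit_of_forall_inner_ne_zero fun x hx h0 ↦ ?_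
  have hpos := add_pos_of_nonneg_of_pos (hS.re_inner_nonneg_left x) (hT x hx)
  rw [← map_add, ← inner_add_left, ← LinearMap.add_apply, h0, map_zero] at hpos
  exact hpos.false

end Positive

/-- Here `Q'` and `Qm'` stand in for the adjoints of `Q` and `Qm`, and the operator `W` for the
scalar `b`. -/
theorem stmt_16_general {R Hm H Hp : Type*} [Semiring R]
    [AddCommGroup Hm] [AddCommGroup H] [AddCommGroup Hp] [Module R Hm] [Module R H] [Module R Hp]
    {Qm : Hm →ₗ[R] H} {Qm' : H →ₗ[R] Hm} {Q : H →ₗ[R] Hp} {Q' : Hp →ₗ[R] H}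
    {W : (Module.End R Hp)ˣ} {G Qf Δ : Module.End R H} {Qfc : Module.End R Hp}
    {D S Sc : Module.End R Hm}
    (hG : G = Q' ∘ₗ W ∘ₗ Q) (hQf : IsUnit Qf) (hGQf : IsUnit (G + Qf))
    (hQfc : Qfc = (↑W⁻¹ + Q ∘ₗ Qf⁻¹ʳ ∘ₗ Q')⁻¹ʳ)
    (hDQ : IsUnit (D + Qm' ∘ₗ Qf ∘ₗ Qm))
    (hDQc : IsUnit (D + (Qm' ∘ₗ Q') ∘ₗ Qfc ∘ₗ (Q ∘ₗ Qm)))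
    (hS : S = (D + Qm' ∘ₗ Qf ∘ₗ Qm)⁻¹ʳ)
    (hSc : Sc = (D + (Qm' ∘ₗ Q') ∘ₗ Qfc ∘ₗ (Q ∘ₗ Qm))⁻¹ʳ)
    (hΔ : Δ = Qf - Qf ∘ₗ Qm ∘ₗ S ∘ₗ Qm' ∘ₗ Qf) :
    IsUnit (Δ + G) ∧
      (Δ + G)⁻¹ʳ = (G + Qf)⁻¹ʳ
        + (G + Qf)⁻¹ʳ ∘ₗ Qf ∘ₗ Qm ∘ₗ Sc ∘ₗ Qm' ∘ₗ Qf ∘ₗ (G + Qf)⁻¹ʳ := by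
  have parallel : Q' ∘ₗ Qfc ∘ₗ Q = Qf - Qf * (G + Qf)⁻¹ʳ * Qf := by
    have h := comp_ringInverse_add_comp_ringInverse_comp_comp (U := Q) (V := Q') W⁻¹.isUnit hQf
    rw [Ring.inverse_unit, inv_inv, ← hG, add_comm Qf, ← hQfc] at h
    exact h hGQf
  have schur : D + Qm' ∘ₗ Qf ∘ₗ Qm + (Qm' ∘ₗ Qf) ∘ₗ (G + Qf)⁻¹ʳ ∘ₗ (-(Qf ∘ₗ Qm)) =
      D + (Qm' ∘ₗ Q') ∘ₗ Qfc ∘ₗ (Q ∘ₗ Qm) := by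
    ext x
    have parallel_apply := LinearMap.congr_fun parallel (Qm x)
    simp only [LinearMap.comp_apply] at parallel_apply
    simp [parallel_apply, sub_eq_add_neg, add_assoc]
  have perturb : Δ + G =
      G + Qf + (-(Qf ∘ₗ Qm)) ∘ₗ (D + Qm' ∘ₗ Qf ∘ₗ Qm)⁻¹ʳ ∘ₗ (Qm' ∘ₗ Qf) := by
    rw [hΔ, hS, LinearMap.neg_comp, LinearMap.comp_assoc]
    abel
  rw [← schur] at hDQc hSc
  rw [perturb, hSc]
  refine ⟨isUnit_add_comp_ringInverse_comp hGQf hDQ hDQc, ?_⟩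
  rw [ringInverse_add_comp_ringInverse_comp hGQf hDQ hDQc]
  simp only [LinearMap.comp_assoc, LinearMap.neg_comp, LinearMap.comp_neg, sub_neg_eq_add]

/-- Remark, part (d): `C = (b Q*Q + 𝔔)⁻¹ + (b Q*Q + 𝔔)⁻¹ 𝔔 Q₋ Š Q₋* 𝔔 (b Q*Q + 𝔔)⁻¹`. -/
theorem stmt_16
    {Hm H Hp : Type*}
    [NormedAddCommGroup Hm] [InnerProductSpace ℝ Hm] [FiniteDimensional ℝ Hm]
    [NormedAddCommGroup H] [InnerProductSpace ℝ H] [FiniteDimensional ℝ H]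
    [NormedAddCommGroup Hp] [InnerProductSpace ℝ Hp] [FiniteDimensional ℝ Hp]
    (Qm : Hm →ₗ[ℝ] H) (Q : H →ₗ[ℝ] Hp)
    (b : ℝ) (hb : 0 < b)
    (Qf : Module.End ℝ H) (hQfsym : Qf.IsSymmetric)
    (hQfpos : ∀ x : H, x ≠ 0 → 0 < ⟪Qf x, x⟫)
    (Qfc : Module.End ℝ Hp)
    (hQfc : Qfc = Ring.inverse
      (b⁻¹ • (1 : Module.End ℝ Hp)
        + Q ∘ₗ Ring.inverse Qf ∘ₗ LinearMap.adjoint Q))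
    (D : Module.End ℝ Hm)
    (hDQ : IsUnit (D + LinearMap.adjoint Qm ∘ₗ Qf ∘ₗ Qm))
    (hDQc : IsUnit (D + LinearMap.adjoint (Q ∘ₗ Qm) ∘ₗ Qfc ∘ₗ (Q ∘ₗ Qm)))
    (S : Module.End ℝ Hm)
    (hS : S = Ring.inverse (D + LinearMap.adjoint Qm ∘ₗ Qf ∘ₗ Qm))
    (Sc : Module.End ℝ Hm)
    (hSc : Sc = Ring.inverse (D + LinearMap.adjoint (Q ∘ₗ Qm) ∘ₗ Qfc ∘ₗ (Q ∘ₗ Qm)))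
    (hD : IsUnit D)
    (Δ : Module.End ℝ H)
    (hΔ : Δ = Qf - Qf ∘ₗ Qm ∘ₗ S ∘ₗ LinearMap.adjoint Qm ∘ₗ Qf)
    (hΔb : IsUnit (Δ + b • (LinearMap.adjoint Q ∘ₗ Q)))
    (C : Module.End ℝ H)
    (hC : C = Ring.inverse (Δ + b • (LinearMap.adjoint Q ∘ₗ Q))) :
    C = Ring.inverse (b • (LinearMap.adjoint Q ∘ₗ Q) + Qf)
      + Ring.inverse (b • (LinearMap.adjoint Q ∘ₗ Q) + Qf)
          ∘ₗ Qf ∘ₗ Qm ∘ₗ Sc ∘ₗ LinearMap.adjoint Qm ∘ₗ Qf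
          ∘ₗ Ring.inverse (b • (LinearMap.adjoint Q ∘ₗ Q) + Qf) := by
  rw [LinearMap.adjoint_comp] at hDQc hSc
  have hbQ := (LinearMap.isPositive_adjoint_comp_self Q).smul_of_nonneg hb.le
  exact hC.trans (stmt_16_general (W := Units.mk0 b hb.ne' • 1) (LinearMap.comp_smul _ _ _).symm
    (isUnit_of_forall_inner_ne_zero fun x hx ↦ (hQfpos x hx).ne')
    (isUnit_add_of_isPositive hbQ hQfpos) hQfc hDQ hDQc hS hSc hΔ).2
end
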